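/- Let K ≥ 1 and let f0^1, …, f0^K be probability densities on [0,1], each continuous and strictly positive on [0,1], and let ε > 0. Then there exist finite Beta mixtures g0 and g^1, …, g^K — each of the form Σ_{h=1}^{H} w_h · f_Beta(·; a_h, b_h) with weights w_h > 0 summing to 1 and parameters a_h, b_h > 0 — and a mixing weight δ ∈ (0,1), such that for every k = 1, …, K, the Kullback–Leibler divergence ∫₀¹ f0^k(x) · log( f0^k(x) / ( δ·g0(x) + (1−δ)·g^k(x) ) ) dx is strictly less than ε. That is, a collection of positive continuous densities can be simultaneously ε-approximated in Kullback–Leibler divergence by mixtures sharing a single common component g0 together with idiosyncratic components g^k. -/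

import Mathlib

open MeasureTheory Real

/-- The Beta density on `(0,1)` with parameters `a, b`. -/
noncomputable def fBeta (a b x : ℝ) : ℝ :=
  (Real.Gamma (a + b) / (Real.Gamma a * Real.Gamma b)) * x ^ (a - 1) * (1 - x) ^ (b - 1)

/-- `g` is a finite mixture of Beta densities: `g = ∑_{h=1}^H w_h f_Beta(·; a_h, b_h)`
with positive weights summing to one and positive parameters. -/
def IsBetaMixture (g : ℝ → ℝ) : Prop :=
  ∃ (H : ℕ) (w a b : Fin H → ℝ), 1 ≤ H ∧
    (∀ h, 0 < w h) ∧ (∑ h, w h = 1) ∧ (∀ h, 0 < a h) ∧ (∀ h, 0 < b h) ∧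
    ∀ x, g x = ∑ h, w h * fBeta (a h) (b h) x

lemma fBeta_integral (a b : ℝ) (ha : 0 < a) (hb : 0 < b) :
    ∫ x in (0:ℝ)..1, fBeta a b x = 1 := by
  have h := ProbabilityTheory.lintegral_betaPDF_eq_one ha hb
  rw [ProbabilityTheory.lintegral_betaPDF] at h
  have hB := ProbabilityTheory.beta_pos ha hb
  rw [intervalIntegral.integral_of_le zero_le_one, integral_Ioc_eq_integral_Ioo]
  have e : ∀ x, fBeta a b x
      = 1 / ProbabilityTheory.beta a b * x ^ (a - 1) * (1 - x) ^ (b - 1) := by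
    intro x
    unfold fBeta ProbabilityTheory.beta
    rw [one_div_div]
  simp_rw [e]
  rw [integral_eq_lintegral_of_nonneg_ae, h]
  · simp
  · refine (ae_restrict_iff' measurableSet_Ioo).2 (Filter.Eventually.of_forall ?_)
    intro x hx
    have h1 : 0 < x := hx.1
    have h2 : 0 < 1 - x := by linarith [hx.2]
    simp only [Pi.zero_apply]
    positivity
  · exact (by fun_prop : Measurable fun x : ℝ =>
      1 / ProbabilityTheory.beta a b * x ^ (a - 1) * (1 - x) ^ (b - 1)).aestronglyMeasurable

lemma fBeta_nat (n k : ℕ) (hk : k ≤ n) (x : ℝ) :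
    fBeta (k + 1) ((n - k : ℕ) + 1) x
      = (n + 1) * ((n.choose k : ℝ) * x ^ k * (1 - x) ^ (n - k)) := by
  unfold fBeta
  have e : ((k:ℝ) + 1 + ((n - k : ℕ) + 1)) = ((n + 1 : ℕ) : ℝ) + 1 := by
    push_cast [Nat.cast_sub hk]; ring
  rw [e, Real.Gamma_nat_eq_factorial, Real.Gamma_nat_eq_factorial, Real.Gamma_nat_eq_factorial,
    add_sub_cancel_right, add_sub_cancel_right, Real.rpow_natCast, Real.rpow_natCast,
    Nat.cast_choose ℝ hk, Nat.factorial_succ]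
  push_cast
  ring

lemma exists_mixture (f : ℝ → ℝ) (hc : ContinuousOn f (Set.Icc 0 1))
    (hpos : ∀ x ∈ Set.Icc (0 : ℝ) 1, 0 < f x) (hint : ∫ x in (0:ℝ)..1, f x = 1)
    (t : ℝ) (ht : 0 < t) :
    ∃ g, IsBetaMixture g ∧ ∀ x ∈ Set.Icc (0:ℝ) 1, f x ≤ (1 + t) * g x := by
  obtain ⟨x0, hx0, hmin⟩ := isCompact_Icc.exists_isMinOn (Set.nonempty_Icc.2 zero_le_one) hc
  have hm := hpos x0 hx0
  set m := f x0 with hmdef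
  have hmle : ∀ x ∈ Set.Icc (0:ℝ) 1, m ≤ f x := fun x hx => hmin hx
  obtain ⟨η, hη, hη1, hη2⟩ : ∃ η > 0, η ≤ t / 2 ∧ η * (1 + t) ≤ t * m / 2 := by
    refine ⟨min (t/2) (t * m / 2 / (1 + t)), by positivity, min_le_left _ _, ?_⟩
    rw [← le_div_iff₀ (by positivity)]
    exact min_le_right _ _
  let F : C(unitInterval, ℝ) := ⟨(Set.Icc (0:ℝ) 1).domRestrict f, hc.domRestrict⟩
  have hF := Metric.tendsto_atTop.1 (bernsteinApproximation_uniform F) η hη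
  obtain ⟨n, hn⟩ := hF
  have hn := hn n le_rfl
  let c : Fin (n + 1) → ℝ := fun k => F (bernstein.z k) / (n + 1)
  have hcpos : ∀ k, 0 < c k := fun k => div_pos (hpos _ (bernstein.z k).2) (by positivity)
  let B : Fin (n + 1) → ℝ → ℝ := fun k => fBeta (k + 1) ((n - k : ℕ) + 1)
  have hBcont : ∀ k, Continuous (B k) := by
    intro k
    have : B k = fun x => (n + 1) * ((n.choose k : ℝ) * x ^ (k:ℕ) * (1 - x) ^ (n - k)) :=
      funext fun x => fBeta_nat n k (Nat.lt_succ_iff.1 k.2) x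
    rw [this]
    fun_prop
  let p : ℝ → ℝ := fun x => ∑ k, c k * B k x
  have hpc : Continuous p := by
    unfold p
    exact continuous_finsetSum _ fun k _ => continuous_const.mul (hBcont k)
  have hclose : ∀ x ∈ Set.Icc (0:ℝ) 1, |p x - f x| < η := by
    intro x hx
    have h1 := (ContinuousMap.dist_lt_iff hη).1 hn ⟨x, hx⟩
    rw [Real.dist_eq, bernsteinApproximation.apply] at h1
    have h2 : p x = ∑ k : Fin (n + 1), bernstein n k ⟨x, hx⟩ • F (bernstein.z k) := by
      refine Finset.sum_congr rfl fun k _ => ?_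
      simp only [c, B]
      rw [fBeta_nat n k (Nat.lt_succ_iff.1 k.2) x, bernstein_apply, smul_eq_mul]
      have : (n:ℝ) + 1 ≠ 0 := by positivity
      field_simp
    rw [h2]
    exact h1
  set S := ∑ k, c k with hS
  have hSpos : 0 < S := Finset.sum_pos (fun k _ => hcpos k) ⟨0, Finset.mem_univ _⟩
  have hfi : IntervalIntegrable f volume 0 1 := by
    apply ContinuousOn.intervalIntegrable
    rwa [Set.uIcc_of_le zero_le_one]
  have hSint : ∫ x in (0:ℝ)..1, p x = S := by
    unfold p
    have hi : ∀ k ∈ Finset.univ, IntervalIntegrable (fun x => c k * B k x) volume 0 1 :=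
      fun k _ => (continuous_const.mul (hBcont k)).intervalIntegrable _ _
    rw [intervalIntegral.integral_finsetSum hi, hS]
    refine Finset.sum_congr rfl fun k _ => ?_
    rw [intervalIntegral.integral_const_mul]
    unfold B
    rw [fBeta_integral _ _ (by positivity) (by positivity), mul_one]
  have hSle : S ≤ 1 + η := by
    have h3 : ∫ x in (0:ℝ)..1, (f x + η) = 1 + η := by
      rw [intervalIntegral.integral_add hfi (by simp), hint]
      simp
    rw [← hSint, ← h3]
    refine intervalIntegral.integral_mono_on zero_le_one (hpc.intervalIntegrable _ _)
      (hfi.add (by simp)) fun x hx => ?_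
    linarith [(abs_lt.1 (hclose x hx)).2]
  refine ⟨fun x => p x / S, ⟨n + 1, fun k => c k / S, fun k => k + 1,
    fun k => (n - k : ℕ) + 1, by omega, fun k => div_pos (hcpos k) hSpos, ?_,
    fun k => by positivity, fun k => by positivity, ?_⟩, ?_⟩
  · rw [← Finset.sum_div]
    exact div_self hSpos.ne'
  · intro x
    simp only [p, B]
    rw [Finset.sum_div]
    exact Finset.sum_congr rfl fun k _ => by ring
  · intro x hx
    have h4 := (abs_lt.1 (hclose x hx)).1
    have h5 := hmle x hx
    have h6 := hpos x hx
    show f x ≤ (1 + t) * (p x / S)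
    rw [← mul_div_assoc, le_div_iff₀ hSpos]
    calc f x * S ≤ f x * (1 + η) := by gcongr
      _ ≤ (1 + t) * (f x - η) := by nlinarith
      _ ≤ (1 + t) * p x := by gcongr; linarith

/-- A finite collection of continuous strictly positive densities on `[0,1]` can be
simultaneously `ε`-approximated in Kullback–Leibler divergence by mixtures
`δ g0 + (1−δ) g^k` sharing one common Beta-mixture component `g0` together with
idiosyncratic Beta-mixture components `g^k`. -/
theorem common_component_KL_approx
    (K : ℕ) (hK : 1 ≤ K) (f0 : Fin K → ℝ → ℝ)
    (hcont : ∀ k, ContinuousOn (f0 k) (Set.Icc 0 1))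
    (hpos : ∀ k, ∀ x ∈ Set.Icc (0 : ℝ) 1, 0 < f0 k x)
    (hint : ∀ k, ∫ x in (0:ℝ)..1, f0 k x = 1)
    (ε : ℝ) (hε : 0 < ε) :
    ∃ (g0 : ℝ → ℝ) (g : Fin K → ℝ → ℝ) (δ : ℝ),
      IsBetaMixture g0 ∧ (∀ k, IsBetaMixture (g k)) ∧ δ ∈ Set.Ioo (0 : ℝ) 1 ∧
      ∀ k, (∫ x in (0:ℝ)..1,
              f0 k x * Real.log (f0 k x / (δ * g0 x + (1 - δ) * g k x))) < ε := by
  obtain ⟨t, ht, ht2⟩ : ∃ t > 0, 2 * t < ε := ⟨ε / 3, by positivity, by linarith⟩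
  have hex := fun k => exists_mixture (f0 k) (hcont k) (hpos k) (hint k) t ht
  choose g hg hfg using hex
  refine ⟨fun _ => 1, g, t / (1 + t), ?_, hg, ⟨by positivity, ?_⟩, ?_⟩
  · refine ⟨1, fun _ => 1, fun _ => 1, fun _ => 1, le_rfl, by simp, by simp, by simp, by simp, ?_⟩
    intro x
    have : Real.Gamma (1 + 1) = 1 := by rw [Real.Gamma_add_one one_ne_zero, Real.Gamma_one, mul_one]
    simp [fBeta, this]
  · rw [div_lt_one (by positivity)]
    linarith
  · intro k
    have hfi : IntervalIntegrable (f0 k) volume 0 1 := by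
      apply ContinuousOn.intervalIntegrable
      rw [Set.uIcc_of_le zero_le_one]
      exact hcont k
    by_cases hI : IntervalIntegrable (fun x => f0 k x *
        Real.log (f0 k x / (t / (1 + t) * 1 + (1 - t / (1 + t)) * g k x))) volume 0 1
    · refine lt_of_le_of_lt (intervalIntegral.integral_mono_on zero_le_one hI
        (hfi.mul_const (2 * t)) ?_) (by rw [intervalIntegral.integral_mul_const, hint]; linarith)
      intro x hx
      have h1 := hpos k x hx
      have h2 := hfg k x hx
      have h3 : 0 < g k x := by
        by_contra h
        nlinarith
      have e : 1 - t / (1 + t) = 1 / (1 + t) := by field_simp; ring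
      rw [e]
      have hD : 0 < t / (1 + t) * 1 + 1 / (1 + t) * g k x := by positivity
      refine mul_le_mul_of_nonneg_left ?_ h1.le
      calc Real.log (f0 k x / (t / (1 + t) * 1 + 1 / (1 + t) * g k x))
          ≤ Real.log ((1 + t) ^ 2) := by
            apply Real.log_le_log (by positivity)
            rw [div_le_iff₀ hD]
            have : (1 + t) ^ 2 * (t / (1 + t) * 1 + 1 / (1 + t) * g k x)
                = (1 + t) * t + (1 + t) * g k x := by field_simp
            rw [this]
            nlinarith
        _ = 2 * Real.log (1 + t) := by rw [Real.log_pow]; norm_num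
        _ ≤ 2 * t := by
            have := Real.log_le_sub_one_of_pos (show 0 < 1 + t by positivity)
            linarith
    · rw [intervalIntegral.integral_undef hI]
      exact hε
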